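/- Let T be a consistent c.e. extension of PA and A(p1,...,pn,q1,...,qm) a propositional formula such that A(p⃗, ⊤^{f(1)},...,⊤^{f(m)}) is contingent for all f : {1,...,m} → {0,1}. Then for any arithmetic sentences ψ1,...,ψm there exist arithmetic sentences φ1,...,φn such that A(φ1,...,φn,ψ1,...,ψm) is independent of T (neither provable nor refutable in T). -/

import Mathlib

/-- An abstract setting for the arithmetic of provability: a type of sentences
of the language of arithmetic with falsity and implication, a provability
predicate `pr` (the sentence `Pr_T(⌜·⌝)`), provability in PA and in the fixed
consistent c.e. extension `T` of PA, the class of Σ₁ sentences, and truth in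
the standard model ℕ. -/
structure PASetup where
  Sent : Type
  fal : Sent
  imp : Sent → Sent → Sent
  pr : Sent → Sent
  PAPrv : Sent → Prop
  TPrv : Sent → Prop
  Sigma1 : Sent → Prop
  TrueN : Sent → Prop

namespace PASetup

def neg (S : PASetup) (A : S.Sent) : S.Sent := S.imp A S.fal
def conj (S : PASetup) (A B : S.Sent) : S.Sent := S.neg (S.imp A (S.neg B))
def disj (S : PASetup) (A B : S.Sent) : S.Sent := S.imp (S.neg A) B
def biimp (S : PASetup) (A B : S.Sent) : S.Sent := S.conj (S.imp A B) (S.imp B A)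
/-- `Con_T := ¬Pr_T(⌜0=1⌝)`. -/
def con (S : PASetup) : S.Sent := S.neg (S.pr S.fal)
/-- Provability in `PA + Con_T` (via the deduction theorem). -/
def PAConPrv (S : PASetup) (A : S.Sent) : Prop := S.PAPrv (S.imp S.con A)

/-- Iterated consistency statements: `Con_T^0 := (0=0)`,
`Con_T^{n+1} := ¬Pr_T(⌜¬Con_T^n⌝)`. -/
def conIter (S : PASetup) : ℕ → S.Sent
  | 0 => S.neg S.fal
  | n+1 => S.neg (S.pr (S.neg (conIter S n)))

/-- `A` is an instance of a propositional tautology. -/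
def TautInst (S : PASetup) (A : S.Sent) : Prop :=
  ∀ v : S.Sent → Bool, (∀ B C, v (S.imp B C) = (!(v B) || v C)) →
    v S.fal = false → v A = true

/-- The standard facts assumed about `PA`, `T`, and the natural Σ₁ provability
predicate `Pr_T` (closure under propositional logic, consistency of `T`, the
Hilbert–Bernays–Löb derivability conditions, provable Σ₁-completeness, Löb's
theorem, soundness of PA, and the semantics of truth in ℕ). -/
structure Facts (S : PASetup) : Prop where
  pa_taut : ∀ A, S.TautInst A → S.PAPrv A
  pa_mp : ∀ A B, S.PAPrv (S.imp A B) → S.PAPrv A → S.PAPrv B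
  pa_t : ∀ A, S.PAPrv A → S.TPrv A
  t_taut : ∀ A, S.TautInst A → S.TPrv A
  t_mp : ∀ A B, S.TPrv (S.imp A B) → S.TPrv A → S.TPrv B
  t_con : ¬ S.TPrv S.fal
  d1 : ∀ A, S.TPrv A → S.PAPrv (S.pr A)
  d2 : ∀ A B, S.PAPrv (S.imp (S.pr (S.imp A B)) (S.imp (S.pr A) (S.pr B)))
  d3 : ∀ A, S.Sigma1 A → S.PAPrv (S.imp A (S.pr A))
  sigma1_pr : ∀ A, S.Sigma1 (S.pr A)
  sigma1_fal : S.Sigma1 S.fal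
  sigma1_top : S.Sigma1 (S.neg S.fal)
  prv_of_incon : ∀ A, S.PAPrv (S.imp (S.neg S.con) (S.pr A))
  lob : ∀ A, S.TPrv (S.imp (S.pr A) A) → S.TPrv A
  pa_sound : ∀ A, S.PAPrv A → S.TrueN A
  true_imp : ∀ A B, S.TrueN (S.imp A B) ↔ (S.TrueN A → S.TrueN B)
  true_fal : ¬ S.TrueN S.fal
  true_pr : ∀ A, S.TrueN (S.pr A) ↔ S.TPrv A

end PASetup

/-- Classical propositional formulas over variable type `α`. -/
inductive PropForm (α : Type) : Type
  | var : α → PropForm α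
  | fal : PropForm α
  | imp : PropForm α → PropForm α → PropForm α

namespace PropForm

variable {α β : Type}

def neg (A : PropForm α) : PropForm α := imp A fal
def top : PropForm α := neg fal
def conj (A B : PropForm α) : PropForm α := neg (imp A (neg B))
def disj (A B : PropForm α) : PropForm α := imp (neg A) B
def biimp (A B : PropForm α) : PropForm α := conj (imp A B) (imp B A)
/-- `⊤^1 = ⊤`, `⊤^0 = ⊥`. -/
def const (b : Bool) : PropForm α := if b then top else fal

def eval (v : α → Bool) : PropForm α → Bool
  | var a => v a
  | fal => false
  | imp A B => !(eval v A) || eval v B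

/-- Simultaneous substitution. -/
def subst (s : α → PropForm β) : PropForm α → PropForm β
  | var a => s a
  | fal => fal
  | imp A B => imp (subst s A) (subst s B)

def Taut (A : PropForm α) : Prop := ∀ v, eval v A = true
def Unsat (A : PropForm α) : Prop := ∀ v, eval v A = false
def Contingent (A : PropForm α) : Prop := ¬ Taut A ∧ ¬ Unsat A

end PropForm

/-- Substitution of arithmetic sentences for the variables of a propositional
formula. -/
def PASetup.interp (S : PASetup) {α : Type} (g : α → S.Sent) : PropForm α → S.Sent
  | PropForm.var a => g a
  | PropForm.fal => S.fal
  | PropForm.imp A B => S.imp (S.interp g A) (S.interp g B)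

/-- Propositional valuations of sentences. -/
def PASetup.IsVal (S : PASetup) (v : S.Sent → Bool) : Prop :=
  (∀ B C, v (S.imp B C) = (!(v B) || v C)) ∧ v S.fal = false

/-- Definition by cases on the sentence `c`. -/
def PASetup.cases (S : PASetup) (c a b : S.Sent) : S.Sent :=
  S.conj (S.imp c a) (S.imp (S.neg c) b)

theorem PASetup.IsVal.cases {S : PASetup} {v : S.Sent → Bool} (h : S.IsVal v)
    (c a b : S.Sent) : v (S.cases c a b) = if v c then v a else v b := by
  simp only [PASetup.cases, PASetup.conj, PASetup.neg, h.1, h.2]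
  cases v c <;> cases v a <;> cases v b <;> rfl

theorem PASetup.IsVal.interp {S : PASetup} {v : S.Sent → Bool} (h : S.IsVal v)
    {α : Type} (g : α → S.Sent) (A : PropForm α) :
    v (S.interp g A) = A.eval (fun a => v (g a)) := by
  induction A with
  | var a => rfl
  | fal => exact h.2
  | imp A B ihA ihB => simp only [PASetup.interp, PropForm.eval, h.1, ihA, ihB]

theorem PropForm.eval_subst {α β : Type} (s : α → PropForm β) (w : β → Bool)
    (A : PropForm α) : (A.subst s).eval w = A.eval (fun a => (s a).eval w) := by
  induction A with
  | var a => rfl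
  | fal => rfl
  | imp A B ihA ihB => simp only [PropForm.subst, PropForm.eval, ihA, ihB]

/-- Functional completeness, inside the sentences. -/
theorem PASetup.exists_repr (S : PASetup) (k : ℕ) : ∀ (θ : Fin k → S.Sent)
    (F : (Fin k → Bool) → Bool),
    ∃ χ, ∀ v, S.IsVal v → v χ = F (fun j => v (θ j)) := by
  induction k with
  | zero =>
    intro θ F
    have key : ∀ w : Fin 0 → Bool, F w = F Fin.elim0 := fun w =>
      congrArg F (Subsingleton.elim _ _)
    cases hF : F Fin.elim0 with
    | false => exact ⟨S.fal, fun v hv => by rw [key, hF, hv.2]⟩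
    | true => exact ⟨S.imp S.fal S.fal, fun v hv => by rw [key, hF, hv.1, hv.2]; rfl⟩
  | succ k ih =>
    intro θ F
    obtain ⟨a, ha⟩ := ih (fun j => θ j.succ) (fun w => F (Fin.cons true w))
    obtain ⟨b, hb⟩ := ih (fun j => θ j.succ) (fun w => F (Fin.cons false w))
    refine ⟨S.cases (θ 0) a b, fun v hv => ?_⟩
    rw [hv.cases, ha v hv, hb v hv]
    have e : (fun j => v (θ j)) = Fin.cons (v (θ 0)) (fun j : Fin k => v (θ j.succ)) := by
      funext j
      refine Fin.cases ?_ (fun j => ?_) j <;> simp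
    rw [e]
    cases v (θ 0) <;> simp

/-- Propositional consequence in PA with two premises. -/
theorem PASetup.Facts.pa_two {S : PASetup} (hS : S.Facts) {B C D : S.Sent}
    (hB : S.PAPrv B) (hC : S.PAPrv C)
    (h : ∀ v, S.IsVal v → v B = true → v C = true → v D = true) : S.PAPrv D := by
  refine hS.pa_mp _ _ (hS.pa_mp _ _ (hS.pa_taut (S.imp B (S.imp C D)) ?_) hB) hC
  intro v h1 h2
  have := h v ⟨h1, h2⟩
  rw [h1, h1]
  revert this
  cases v B <;> cases v C <;> cases v D <;> simp

theorem PASetup.Facts.t_one {S : PASetup} (hS : S.Facts) {B D : S.Sent}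
    (hB : S.TPrv B) (h : ∀ v, S.IsVal v → v B = true → v D = true) : S.TPrv D := by
  refine hS.t_mp _ _ (hS.t_taut (S.imp B D) ?_) hB
  intro v h1 h2
  have := h v ⟨h1, h2⟩
  rw [h1]
  revert this
  cases v B <;> cases v D <;> simp

/-- A sentence independent of `T`. -/
theorem PASetup.Facts.exists_indep {S : PASetup} (hS : S.Facts)
    (fgh : ∀ σ, S.Sigma1 σ → ∃ φ, S.PAConPrv (S.biimp σ (S.pr φ)))
    (indep : ∃ σ, S.Sigma1 σ ∧ ¬ S.PAConPrv σ ∧ ¬ S.PAConPrv (S.neg σ)) :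
    ∃ γ, ¬ S.TPrv γ ∧ ¬ S.TPrv (S.neg γ) := by
  obtain ⟨σ, hσ, h1, h2⟩ := indep
  obtain ⟨γ, hγ⟩ := fgh σ hσ
  refine ⟨γ, fun h => h1 ?_, fun h => h2 ?_⟩
  · refine hS.pa_two hγ (hS.d1 _ h) fun v hv => ?_
    simp only [PASetup.biimp, PASetup.conj, PASetup.con, PASetup.neg, hv.1, hv.2]
    cases v (S.pr S.fal) <;> cases v σ <;> cases v (S.pr γ) <;> simp
  · have h3 := hS.pa_mp _ _ (hS.d2 γ S.fal) (hS.d1 _ h)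
    refine hS.pa_two hγ h3 fun v hv => ?_
    simp only [PASetup.biimp, PASetup.conj, PASetup.con, PASetup.neg, hv.1, hv.2]
    cases v (S.pr S.fal) <;> cases v σ <;> cases v (S.pr γ) <;> simp

/-- assuming a Σ₁ sentence independent of `PA + Con_T` and the
FGH theorem: if `A(p⃗,⊤^{f(1)},…,⊤^{f(m)})` is contingent for all `f`, then
for all sentences `ψ₁,…,ψₘ` there are sentences `φ₁,…,φₙ` such that
`A(φ₁,…,φₙ,ψ₁,…,ψₘ)` is independent of `T`. -/
theorem incompleteness_prop_form (S : PASetup) (hS : S.Facts)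
    (fgh : ∀ σ, S.Sigma1 σ → ∃ φ, S.PAConPrv (S.biimp σ (S.pr φ)))
    (indep : ∃ σ, S.Sigma1 σ ∧ ¬ S.PAConPrv σ ∧ ¬ S.PAConPrv (S.neg σ))
    (n m : ℕ) (A : PropForm (Fin n ⊕ Fin m))
    (hA : ∀ f : Fin m → Bool,
      PropForm.Contingent (A.subst fun x =>
        match x with
        | Sum.inl i => PropForm.var i
        | Sum.inr j => PropForm.const (f j))) :
    ∀ ψ : Fin m → S.Sent, ∃ φ : Fin n → S.Sent,
      ¬ S.TPrv (S.interp (Sum.elim φ ψ) A) ∧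
      ¬ S.TPrv (S.neg (S.interp (Sum.elim φ ψ) A)) := by
  intro ψ
  obtain ⟨γ, hγ1, hγ2⟩ := hS.exists_indep fgh indep
  have ev : ∀ (f : Fin m → Bool) (w : Fin n → Bool),
      (A.subst fun x =>
        match x with
        | Sum.inl i => PropForm.var i
        | Sum.inr j => PropForm.const (f j)).eval w = A.eval (Sum.elim w f) := by
    intro f w
    rw [PropForm.eval_subst]
    congr 1
    funext x
    rcases x with i | j
    · rfl
    · simp only [Sum.elim_inr]
      cases f j <;> rfl
  have hpos : ∀ f : Fin m → Bool, ∃ w : Fin n → Bool, A.eval (Sum.elim w f) = true := by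
    intro f
    by_contra hc
    refine (hA f).2 fun w => ?_
    rw [ev]
    exact Bool.eq_false_iff.2 fun h => hc ⟨w, h⟩
  have hneg : ∀ f : Fin m → Bool, ∃ w : Fin n → Bool, A.eval (Sum.elim w f) = false := by
    intro f
    by_contra hc
    refine (hA f).1 fun w => ?_
    rw [ev]
    by_contra h
    exact hc ⟨w, Bool.eq_false_iff.2 h⟩
  choose P hP using hpos
  choose N hN using hneg
  choose a ha using fun i => S.exists_repr m ψ (fun f => P f i)
  choose b hb using fun i => S.exists_repr m ψ (fun f => N f i)
  have key : ∀ v, S.IsVal v →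
      v (S.interp (Sum.elim (fun i => S.cases γ (a i) (b i)) ψ) A) = v γ := by
    intro v hv
    rw [hv.interp]
    have e : (fun x => v (Sum.elim (fun i => S.cases γ (a i) (b i)) ψ x)) =
        Sum.elim (if v γ then P (fun j => v (ψ j)) else N (fun j => v (ψ j)))
          (fun j => v (ψ j)) := by
      funext x
      rcases x with i | j
      · simp only [Sum.elim_inl]
        rw [hv.cases, ha i v hv, hb i v hv]
        cases v γ <;> rfl
      · rfl
    rw [e]
    cases v γ
    · exact hN _
    · exact hP _
  refine ⟨fun i => S.cases γ (a i) (b i), fun h => hγ1 ?_, fun h => hγ2 ?_⟩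
  · exact hS.t_one h fun v hv h' => by rw [← key v hv, h']
  · refine hS.t_one h fun v hv h' => ?_
    rw [PASetup.neg, hv.1, key v hv] at h'
    rw [PASetup.neg, hv.1, h']
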